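/- arXiv:2108.12085 — 3 statements merged into one kernel-verified Lean document; each statement's English description precedes it below -/
import Mathlib

section
/- Let $X$ be a real random variable on a probability space $(\Omega,\mathcal F,P)$. For all real $\alpha>0$, $\gamma>0$ and $\beta>-1$ there exists a constant $C>0$, depending only on $\alpha$, $\beta$, $\gamma$, such that $\int_{1}^{\infty} u^{\beta}\ln(u)\, E\big[|X|^{\alpha}\,\mathbf 1\{|X|>u^{\gamma}\}\big]\, du \;\le\; C\, E\big[|X|^{(\beta+1)/\gamma+\alpha}\,\ln(1+|X|)\big]$. -/
open MeasureTheory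

/-!
By Tonelli, the left-hand side is the expectation of `|X|^α` times the integral of `u^β ln u` over
`1 < u < b`, where `b = |X|^(1/γ)`. Bounding `ln u` by `ln b ≤ ln (1 + |X|) / γ` and integrating
`u^β` over `(0, b]` shows that `C = 1 / (γ (β + 1))` works.
-/

lemma lintegral_mul_setLIntegral_swap {S T : Type*} [MeasurableSpace S] [MeasurableSpace T]
    {μ : Measure S} {ν : Measure T} [SFinite μ] [SFinite ν] {w : S → ENNReal} {f : T → ENNReal}
    {A : Set (S × T)} (hw : AEMeasurable w μ) (hf : AEMeasurable f ν) (hA : MeasurableSet A) :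
    ∫⁻ s, w s * ∫⁻ t in Prod.mk s ⁻¹' A, f t ∂ν ∂μ =
      ∫⁻ t, (∫⁻ s in (·, t) ⁻¹' A, w s ∂μ) * f t ∂ν := by
  have section_left (s : S) : w s * ∫⁻ t in Prod.mk s ⁻¹' A, f t ∂ν =
      ∫⁻ t, A.indicator (fun p => w p.1 * f p.2) (s, t) ∂ν := by
    rw [← lintegral_const_mul'' _ hf.restrict, ← lintegral_indicator (measurable_prodMk_left hA)]
    rfl
  have section_right (t : T) : (∫⁻ s in (·, t) ⁻¹' A, w s ∂μ) * f t =
      ∫⁻ s, A.indicator (fun p => w p.1 * f p.2) (s, t) ∂μ := by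
    rw [← lintegral_mul_const'' _ hw.restrict, ← lintegral_indicator (measurable_prodMk_right hA)]
    rfl
  simp only [section_left, section_right]
  exact lintegral_lintegral_swap ((hw.comp_fst.mul hf.comp_snd).indicator hA)

lemma lintegral_rpow_Ioc {β b : ℝ} (hβ : -1 < β) (hb : 0 ≤ b) :
    ∫⁻ u in Set.Ioc 0 b, ENNReal.ofReal (u ^ β) = ENNReal.ofReal (b ^ (β + 1) / (β + 1)) := by
  have integrable : IntegrableOn (fun u : ℝ => u ^ β) (Set.Ioc 0 b) :=
    (intervalIntegrable_iff_integrableOn_Ioc_of_le hb).1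
      (intervalIntegral.intervalIntegrable_rpow' hβ)
  have nonneg : ∀ᵐ u ∂volume.restrict (Set.Ioc 0 b), 0 ≤ u ^ β :=
    ae_restrict_of_forall_mem measurableSet_Ioc fun u hu => Real.rpow_nonneg hu.1.le β
  rw [← ofReal_integral_eq_lintegral_ofReal integrable nonneg,
    ← intervalIntegral.integral_of_le hb, integral_rpow (Or.inl hβ),
    Real.zero_rpow (by linarith), sub_zero]

lemma lintegral_rpow_mul_log_Ioo_one_le {β : ℝ} (hβ : -1 < β) (b : ℝ) :
    ∫⁻ u in Set.Ioo 1 b, ENNReal.ofReal (u ^ β * Real.log u) ≤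
      ENNReal.ofReal (b ^ (β + 1) / (β + 1) * Real.log b) := by
  rcases le_or_gt b 1 with hb | hb
  · simp [Set.Ioo_eq_empty_of_le hb]
  have hlog : 0 ≤ Real.log b := Real.log_nonneg hb.le
  calc ∫⁻ u in Set.Ioo 1 b, ENNReal.ofReal (u ^ β * Real.log u)
      ≤ ∫⁻ u in Set.Ioo 1 b, ENNReal.ofReal (u ^ β) * ENNReal.ofReal (Real.log b) := by
        refine setLIntegral_mono' measurableSet_Ioo fun u hu => ?_
        have hu_pos : 0 < u := one_pos.trans hu.1
        rw [← ENNReal.ofReal_mul' hlog]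
        gcongr
        exact hu.2.le
    _ ≤ ∫⁻ u in Set.Ioc 0 b, ENNReal.ofReal (u ^ β) * ENNReal.ofReal (Real.log b) :=
        lintegral_mono_set fun _ hu => ⟨one_pos.trans hu.1, hu.2.le⟩
    _ = ENNReal.ofReal (b ^ (β + 1) / (β + 1) * Real.log b) := by
        rw [lintegral_mul_const _ (by fun_prop), lintegral_rpow_Ioc hβ (by linarith),
          ← ENNReal.ofReal_mul' hlog]

lemma setOf_rpow_lt_inter_Ioi_one {γ x : ℝ} (hγ : 0 < γ) (hx : 0 ≤ x) :
    {u : ℝ | u ^ γ < x} ∩ Set.Ioi 1 = Set.Ioo 1 (x ^ γ⁻¹) := by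
  ext u
  refine and_comm.trans (and_congr_right fun hu : 1 < u => ?_)
  exact (Real.lt_rpow_inv_iff_of_pos (by linarith) hx hγ).symm

lemma lintegral_rpow_mul_log_of_rpow_lt_le {γ β x : ℝ} (hγ : 0 < γ) (hβ : -1 < β) (hx : 0 ≤ x) :
    ∫⁻ u in {u | u ^ γ < x}, ENNReal.ofReal (u ^ β * Real.log u) ∂volume.restrict (Set.Ioi 1) ≤
      ENNReal.ofReal (1 / (γ * (β + 1)) * (x ^ ((β + 1) / γ) * Real.log (1 + x))) := by
  have hβ' : 0 < β + 1 := by linarith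
  rw [Measure.restrict_restrict (measurableSet_lt (by fun_prop) (by fun_prop)),
    setOf_rpow_lt_inter_Ioi_one hγ hx]
  rcases hx.eq_or_lt with rfl | hx_pos
  · simp [Real.zero_rpow (inv_ne_zero hγ.ne')]
  calc ∫⁻ u in Set.Ioo 1 (x ^ γ⁻¹), ENNReal.ofReal (u ^ β * Real.log u)
      ≤ ENNReal.ofReal ((x ^ γ⁻¹) ^ (β + 1) / (β + 1) * Real.log (x ^ γ⁻¹)) :=
        lintegral_rpow_mul_log_Ioo_one_le hβ _
    _ = ENNReal.ofReal (1 / (γ * (β + 1)) * (x ^ ((β + 1) / γ) * Real.log x)) := by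
        rw [← Real.rpow_mul hx, Real.log_rpow hx_pos, inv_mul_eq_div]
        congr 1
        field_simp
    _ ≤ ENNReal.ofReal (1 / (γ * (β + 1)) * (x ^ ((β + 1) / γ) * Real.log (1 + x))) := by
        gcongr
        linarith

lemma rpow_mul_log_one_add_mul_rpow {x : ℝ} (hx : 0 ≤ x) (p q : ℝ) :
    x ^ p * Real.log (1 + x) * x ^ q = x ^ (p + q) * Real.log (1 + x) := by
  rcases hx.eq_or_lt with rfl | hx_pos
  · simp
  · rw [Real.rpow_add hx_pos, mul_right_comm]

theorem stmt_10_general {Ω E : Type*} [MeasurableSpace Ω] [SeminormedAddCommGroup E]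
    [MeasurableSpace E] [OpensMeasurableSpace E] (α : ℝ) {γ β : ℝ} (hγ : 0 < γ) (hβ : -1 < β)
    (P : Measure Ω) [SFinite P] {X : Ω → E} (hX : Measurable X) :
    ∫⁻ u in Set.Ioi (1 : ℝ),
        ENNReal.ofReal (u ^ β * Real.log u) *
          ∫⁻ ω in {ω | u ^ γ < ‖X ω‖}, ENNReal.ofReal (‖X ω‖ ^ α) ∂P ≤
      ENNReal.ofReal (1 / (γ * (β + 1))) *
        ∫⁻ ω, ENNReal.ofReal (‖X ω‖ ^ ((β + 1) / γ + α) * Real.log (1 + ‖X ω‖)) ∂P := by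
  have hβ' : 0 < β + 1 := by linarith
  have measurableSet_region : MeasurableSet {p : ℝ × Ω | p.1 ^ γ < ‖X p.2‖} :=
    measurableSet_lt (by fun_prop) (by fun_prop)
  calc _ = ∫⁻ ω, (∫⁻ u in {u | u ^ γ < ‖X ω‖}, ENNReal.ofReal (u ^ β * Real.log u)
          ∂volume.restrict (Set.Ioi 1)) * ENNReal.ofReal (‖X ω‖ ^ α) ∂P :=
        lintegral_mul_setLIntegral_swap (by fun_prop) (by fun_prop) measurableSet_region
    _ ≤ ∫⁻ ω, ENNReal.ofReal (1 / (γ * (β + 1)) *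
          (‖X ω‖ ^ ((β + 1) / γ) * Real.log (1 + ‖X ω‖))) * ENNReal.ofReal (‖X ω‖ ^ α) ∂P := by
        gcongr with ω
        exact lintegral_rpow_mul_log_of_rpow_lt_le hγ hβ (norm_nonneg _)
    _ = ∫⁻ ω, ENNReal.ofReal (1 / (γ * (β + 1))) *
          ENNReal.ofReal (‖X ω‖ ^ ((β + 1) / γ + α) * Real.log (1 + ‖X ω‖)) ∂P := by
        refine lintegral_congr fun ω => ?_
        rw [← ENNReal.ofReal_mul' (by positivity), ← ENNReal.ofReal_mul (by positivity), mul_assoc,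
          rpow_mul_log_one_add_mul_rpow (norm_nonneg _)]
    _ = _ := lintegral_const_mul _ (by fun_prop)

/-- Classical specialization of Lemma 2.1(ii): for `α > 0`, `γ > 0`, `β > -1` there is a
constant `C > 0` depending only on `α, β, γ` with
`∫_1^∞ u^β ln(u) E[|X|^α 1{|X| > u^γ}] du ≤ C · E[|X|^{(β+1)/γ + α} ln(1+|X|)]`, in `[0, ∞]`. -/
theorem stmt_10 (α γ β : ℝ) (hα : 0 < α) (hγ : 0 < γ) (hβ : -1 < β) :
    ∃ C > (0 : ℝ), ∀ (Ω : Type) [MeasurableSpace Ω] (P : Measure Ω)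
      [IsProbabilityMeasure P] (X : Ω → ℝ), Measurable X →
      ∫⁻ u in Set.Ioi (1 : ℝ),
          ENNReal.ofReal (u ^ β * Real.log u) *
            ∫⁻ ω in {ω | u ^ γ < |X ω|}, ENNReal.ofReal (|X ω| ^ α) ∂P ≤
        ENNReal.ofReal C *
          ∫⁻ ω, ENNReal.ofReal (|X ω| ^ ((β + 1) / γ + α) * Real.log (1 + |X ω|)) ∂P :=
  ⟨1 / (γ * (β + 1)), one_div_pos.2 (mul_pos hγ (by linarith)),
    fun _ _ P _ _ hX => stmt_10_general α hγ hβ P hX⟩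
end

section
/- Let $X$ be a real random variable on a probability space $(\Omega,\mathcal F,P)$, and let $r>1$, $p>1/2$, $\beta$ be reals with $\beta+p>0$, and let $\varepsilon>0$. Assume the moment condition: $E\big[|X|^{(r-1)/(p+\beta)}\big]<\infty$ if $-p<\beta<-p/r$; $E\big[|X|^{r/p}\ln(1+|X|)\big]<\infty$ if $\beta=-p/r$; and $E\big[|X|^{r/p}\big]<\infty$ if $\beta>-p/r$. Then $\sum_{n=1}^{\infty} n^{r-2}\sum_{i=1}^{n} P\big(|X|>\varepsilon\, n^{p+\beta}\, i^{-\beta}\big)\;<\;\infty$. -/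
open MeasureTheory

/-!
After rescaling to `ε = 1`, Tonelli turns the series into `∫ S(‖X‖)`, where `S(y)` is the sum of
`n ^ (r - 2)` over the pairs `1 ≤ i ≤ n` with `n ^ (p + β) * i ^ (-β) < y`. It then suffices to
bound `S` pointwise by the integrand of the moment condition.

Put `t = (r - 1) / (p + β)`. For fixed `i` the constraint reads `n < (y * i ^ β) ^ (1 / (p + β))`,
so the sum over `n` is `O((y * i ^ β) ^ t)`, since `r - 2 > -1`; combined with `i ≤ n` it also
forces `i ≤ y ^ (1 / p)`. Hence `S(y) = O(y ^ t * ∑ i ^ (β * t))` over `i ≤ y ^ (1 / p)`. The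
regimes `β < -p / r`, `β = -p / r`, `β > -p / r` are exactly `β * t < -1`, `β * t = -1`,
`β * t > -1`, where the power sum is respectively bounded, logarithmic, or
`O(y ^ ((β * t + 1) / p))`, and `t + (β * t + 1) / p = r / p`.
-/

open Finset
open scoped ENNReal

lemma mul_rpow_sub_one_le_rpow_sub_rpow {b x : ℝ} (hb₀ : 0 ≤ b) (hb₁ : b ≤ 1) (hx : 1 ≤ x) :
    b * x ^ (b - 1) ≤ x ^ b - (x - 1) ^ b := by
  have hx₀ : 0 < x := by linarith
  have hinv : x⁻¹ ≤ 1 := inv_le_one_of_one_le₀ hx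
  have bernoulli : (1 + -x⁻¹) ^ b ≤ 1 + b * -x⁻¹ :=
    rpow_one_add_le_one_add_mul_self (by linarith) hb₀ hb₁
  have hfactor : x - 1 = x * (1 + -x⁻¹) := by field_simp; ring
  have hle : (x - 1) ^ b ≤ x ^ b - b * x ^ (b - 1) := calc
    (x - 1) ^ b = x ^ b * (1 + -x⁻¹) ^ b := by
      rw [hfactor, Real.mul_rpow hx₀.le (by linarith)]
    _ ≤ x ^ b * (1 + b * -x⁻¹) := by gcongr
    _ = x ^ b - b * x ^ (b - 1) := by rw [Real.rpow_sub_one hx₀.ne']; ring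
  linarith

lemma sum_Icc_rpow_le_of_nonneg {a : ℝ} (ha : 0 ≤ a) (N : ℕ) :
    ∑ n ∈ Icc 1 N, (n : ℝ) ^ a ≤ (N : ℝ) ^ (a + 1) := calc
  ∑ n ∈ Icc 1 N, (n : ℝ) ^ a ≤ ∑ _n ∈ Icc 1 N, (N : ℝ) ^ a := by
    refine sum_le_sum fun n hn => ?_
    have hnN : n ≤ N := (mem_Icc.1 hn).2
    gcongr
  _ = (N : ℝ) ^ (a + 1) := by
    rw [Real.rpow_add_one' N.cast_nonneg (by linarith), sum_const, Nat.card_Icc,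
      Nat.add_sub_cancel, nsmul_eq_mul, mul_comm]

lemma mul_sum_Icc_rpow_le_of_nonpos {a : ℝ} (ha : -1 < a) (ha₀ : a ≤ 0) (N : ℕ) :
    (a + 1) * ∑ n ∈ Icc 1 N, (n : ℝ) ^ a ≤ (N : ℝ) ^ (a + 1) := by
  induction N with
  | zero => simp [Real.zero_rpow (by linarith : a + 1 ≠ 0)]
  | succ N ih =>
    have hstep := mul_rpow_sub_one_le_rpow_sub_rpow (b := a + 1) (x := (N + 1 : ℕ))
      (by linarith) (by linarith) (by simp)
    rw [add_sub_cancel_right, Nat.cast_succ, add_sub_cancel_right] at hstep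
    rw [sum_Icc_succ_top (by omega), mul_add, Nat.cast_succ]
    linarith

lemma exists_sum_Icc_floor_rpow_le {a : ℝ} (ha : -1 < a) :
    ∃ C : ℝ, 0 ≤ C ∧ ∀ z : ℝ, 0 ≤ z →
      ∑ n ∈ Icc 1 ⌊z⌋₊, (n : ℝ) ^ a ≤ C * z ^ (a + 1) := by
  have ha₁ : 0 < a + 1 := by linarith
  obtain ⟨C, hC, hsum⟩ : ∃ C : ℝ, 0 ≤ C ∧ ∀ N : ℕ,
      ∑ n ∈ Icc 1 N, (n : ℝ) ^ a ≤ C * (N : ℝ) ^ (a + 1) := by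
    rcases le_total 0 a with h | h
    · exact ⟨1, zero_le_one, fun N => (sum_Icc_rpow_le_of_nonneg h N).trans_eq (one_mul _).symm⟩
    · exact ⟨(a + 1)⁻¹, by positivity, fun N =>
        (le_inv_mul_iff₀ ha₁).2 (mul_sum_Icc_rpow_le_of_nonpos ha h N)⟩
  refine ⟨C, hC, fun z hz => (hsum _).trans ?_⟩
  gcongr
  exact Nat.floor_le hz

lemma exists_rpow_mul_sum_Icc_floor_rpow_le {t u a : ℝ} (ht : 0 ≤ t) (hu : 0 ≤ u) (ha : -1 < a) :
    ∃ C : ℝ, 0 ≤ C ∧ ∀ y : ℝ, 0 ≤ y →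
      y ^ t * ∑ i ∈ Icc 1 ⌊y ^ u⌋₊, (i : ℝ) ^ a ≤ C * y ^ (t + u * (a + 1)) := by
  have ha₁ : 0 ≤ a + 1 := by linarith
  obtain ⟨C, hC, hsum⟩ := exists_sum_Icc_floor_rpow_le ha
  refine ⟨C, hC, fun y hy => ?_⟩
  calc y ^ t * ∑ i ∈ Icc 1 ⌊y ^ u⌋₊, (i : ℝ) ^ a
      ≤ y ^ t * (C * (y ^ u) ^ (a + 1)) := by gcongr; exact hsum _ (by positivity)
    _ = C * (y ^ t * y ^ (u * (a + 1))) := by rw [← Real.rpow_mul hy]; ring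
    _ = C * y ^ (t + u * (a + 1)) := by rw [← Real.rpow_add_of_nonneg hy ht (by positivity)]

lemma exists_sum_Icc_floor_rpow_inv_le_log {s : ℝ} (hs : 0 < s) :
    ∃ C : ℝ, 0 ≤ C ∧ ∀ y : ℝ, 0 ≤ y →
      ∑ i ∈ Icc 1 ⌊y ^ s⌋₊, (i : ℝ)⁻¹ ≤ C * Real.log (1 + y) := by
  have hlog₂ : 0 < Real.log 2 := Real.log_pos one_lt_two
  refine ⟨(Real.log 2)⁻¹ + s, by positivity, fun y hy => ?_⟩
  rcases lt_or_ge y 1 with hy₁ | hy₁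
  · have hempty : ⌊y ^ s⌋₊ = 0 := Nat.floor_eq_zero.2 (Real.rpow_lt_one hy hy₁ hs)
    have hlog : 0 ≤ Real.log (1 + y) := Real.log_nonneg (by linarith)
    simp only [hempty, zero_lt_one, Icc_eq_empty_of_lt, sum_empty]
    positivity
  · have hone : 1 ≤ (Real.log 2)⁻¹ * Real.log (1 + y) :=
      (le_inv_mul_iff₀ hlog₂).2 (by rw [mul_one]; exact Real.log_le_log two_pos (by linarith))
    calc ∑ i ∈ Icc 1 ⌊y ^ s⌋₊, (i : ℝ)⁻¹ = (harmonic ⌊y ^ s⌋₊ : ℝ) := by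
          rw [harmonic_eq_sum_Icc]; push_cast; rfl
      _ ≤ 1 + Real.log (y ^ s) :=
          harmonic_floor_le_one_add_log _ (Real.one_le_rpow hy₁ hs.le)
      _ = 1 + s * Real.log y := by rw [Real.log_rpow (by linarith)]
      _ ≤ (Real.log 2)⁻¹ * Real.log (1 + y) + s * Real.log (1 + y) := by
          gcongr
          linarith
      _ = ((Real.log 2)⁻¹ + s) * Real.log (1 + y) := by ring

lemma log_one_add_mul_le {c x : ℝ} (hc : 0 ≤ c) (hx : 0 ≤ x) :
    Real.log (1 + c * x) ≤ max 1 c * Real.log (1 + x) := calc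
  Real.log (1 + c * x) ≤ Real.log ((1 + x) ^ max 1 c) := by
    refine Real.log_le_log (by positivity) ?_
    calc 1 + c * x ≤ 1 + max 1 c * x := by gcongr; exact le_max_right 1 c
      _ ≤ (1 + x) ^ max 1 c :=
        one_add_mul_self_le_rpow_one_add (by linarith) (le_max_left 1 c)
  _ = max 1 c * Real.log (1 + x) := Real.log_rpow (by linarith) _

/-- The integrand of the moment condition on `‖X‖`, chosen according to the position of `β`
relative to the critical value `-p / r`. -/
noncomputable def momentGauge (r p β x : ℝ) : ℝ :=
  if β < -p / r then x ^ ((r - 1) / (p + β))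
  else if β = -p / r then x ^ (r / p) * Real.log (1 + x)
  else x ^ (r / p)

/-- The sum of `n ^ (r - 2)` over the pairs `1 ≤ i ≤ n` with `n ^ (p + β) * i ^ (-β) < y`: the
series of the theorem for `ε = 1` and the constant variable `y`, each probability being then `0`
or `1`. -/
noncomputable def exceedanceSum (r p β y : ℝ) : ℝ≥0∞ :=
  ∑' n : ℕ, ENNReal.ofReal ((n : ℝ) ^ (r - 2)) *
    ∑ i ∈ Icc 1 n, (Set.Ioi ((n : ℝ) ^ (p + β) * (i : ℝ) ^ (-β))).indicator 1 y

lemma exists_momentGauge_mul_le (r p β : ℝ) {c : ℝ} (hc : 0 ≤ c) :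
    ∃ C : ℝ, ∀ x : ℝ, 0 ≤ x → momentGauge r p β (c * x) ≤ C * momentGauge r p β x := by
  unfold momentGauge
  split_ifs
  · exact ⟨c ^ ((r - 1) / (p + β)), fun x hx => (Real.mul_rpow hc hx).le⟩
  · refine ⟨c ^ (r / p) * max 1 c, fun x hx => ?_⟩
    calc (c * x) ^ (r / p) * Real.log (1 + c * x)
        ≤ (c * x) ^ (r / p) * (max 1 c * Real.log (1 + x)) := by
          gcongr; exact log_one_add_mul_le hc hx
      _ = c ^ (r / p) * max 1 c * (x ^ (r / p) * Real.log (1 + x)) := by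
          rw [Real.mul_rpow hc hx]; ring
  · exact ⟨c ^ (r / p), fun x hx => (Real.mul_rpow hc hx).le⟩

lemma le_rpow_inv_of_rpow_mul_rpow_neg_le {q β x z y : ℝ} (hq : 0 < q) (hx : 0 ≤ x)
    (hz : 0 < z) (hy : 0 ≤ y) (h : x ^ q * z ^ (-β) ≤ y) : x ≤ (y * z ^ β) ^ q⁻¹ := by
  rw [Real.le_rpow_inv_iff_of_pos hx (by positivity) hq]
  rwa [Real.rpow_neg hz.le, ← div_eq_mul_inv, div_le_iff₀ (by positivity)] at h

lemma le_rpow_inv_of_le_mul_rpow_rpow_inv {p β z y : ℝ} (hp : 0 < p) (hpβ : 0 < p + β)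
    (hz : 0 < z) (hy : 0 ≤ y) (h : z ≤ (y * z ^ β) ^ (p + β)⁻¹) : z ≤ y ^ p⁻¹ := by
  rw [Real.le_rpow_inv_iff_of_pos hz.le (by positivity) hpβ, Real.rpow_add hz] at h
  rw [Real.le_rpow_inv_iff_of_pos hz.le hy hp]
  exact le_of_mul_le_mul_right h (by positivity)

lemma exceedanceSum_le_sum_sum (r : ℝ) {p β y : ℝ} (hp : 0 < p) (hpβ : 0 < p + β)
    (hy : 0 ≤ y) :
    exceedanceSum r p β y ≤ ∑ i ∈ Icc 1 ⌊y ^ p⁻¹⌋₊,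
      ∑ n ∈ Icc 1 ⌊(y * (i : ℝ) ^ β) ^ (p + β)⁻¹⌋₊, ENNReal.ofReal ((n : ℝ) ^ (r - 2)) := by
  let w (n : ℕ) : ℝ≥0∞ := ENNReal.ofReal ((n : ℝ) ^ (r - 2))
  let B (i : ℕ) : Finset ℕ := Icc 1 ⌊(y * (i : ℝ) ^ β) ^ (p + β)⁻¹⌋₊
  let F (i n : ℕ) : ℝ≥0∞ := (B i : Set ℕ).indicator w n
  have indicator_le (n i : ℕ) (hi : i ∈ Icc 1 n) :
      w n * (Set.Ioi ((n : ℝ) ^ (p + β) * (i : ℝ) ^ (-β))).indicator 1 y ≤ F i n := by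
    obtain ⟨hi₁, hin⟩ := mem_Icc.1 hi
    by_cases h : (n : ℝ) ^ (p + β) * (i : ℝ) ^ (-β) < y
    · have hn : n ∈ B i := mem_Icc.2 ⟨hi₁.trans hin, Nat.le_floor <|
        le_rpow_inv_of_rpow_mul_rpow_neg_le hpβ n.cast_nonneg (by exact_mod_cast hi₁) hy h.le⟩
      simp [F, hn, h]
    · simp [h]
  have mem_of_ne_zero (n i : ℕ) (hi : i ∈ Icc 1 n) (hF : F i n ≠ 0) :
      i ∈ Icc 1 ⌊y ^ p⁻¹⌋₊ := by
    obtain ⟨hi₁, hin⟩ := mem_Icc.1 hi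
    have hn : n ∈ B i := mem_coe.1 (Set.mem_of_indicator_ne_zero hF)
    have hi₀ : 0 < (i : ℝ) := by exact_mod_cast hi₁
    have hiB : (i : ℝ) ≤ (y * (i : ℝ) ^ β) ^ (p + β)⁻¹ :=
      (Nat.le_floor_iff (by positivity)).1 (hin.trans (mem_Icc.1 hn).2)
    exact mem_Icc.2
      ⟨hi₁, Nat.le_floor (le_rpow_inv_of_le_mul_rpow_rpow_inv hp hpβ hi₀ hy hiB)⟩
  calc exceedanceSum r p β y ≤ ∑' n, ∑ i ∈ Icc 1 ⌊y ^ p⁻¹⌋₊, F i n := by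
        refine ENNReal.tsum_le_tsum fun n => ?_
        rw [mul_sum]
        exact (sum_le_sum (indicator_le n)).trans (sum_le_sum_of_ne_zero (mem_of_ne_zero n))
    _ = ∑ i ∈ Icc 1 ⌊y ^ p⁻¹⌋₊, ∑' n, F i n :=
        Summable.tsum_finsetSum fun _ _ => ENNReal.summable
    _ = ∑ i ∈ Icc 1 ⌊y ^ p⁻¹⌋₊, ∑ n ∈ B i, w n :=
        sum_congr rfl fun i _ => (sum_eq_tsum_indicator w (B i)).symm

lemma exists_exceedanceSum_le_rpow_mul_sum {r p β : ℝ} (hr : 1 < r) (hp : 0 < p)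
    (hpβ : 0 < p + β) :
    ∃ C : ℝ, 0 ≤ C ∧ ∀ y : ℝ, 0 ≤ y → exceedanceSum r p β y ≤
      ENNReal.ofReal (C * (y ^ ((r - 1) / (p + β)) *
        ∑ i ∈ Icc 1 ⌊y ^ p⁻¹⌋₊, (i : ℝ) ^ (β * ((r - 1) / (p + β))))) := by
  set t := (r - 1) / (p + β) with ht
  obtain ⟨C, hC, hsum⟩ := exists_sum_Icc_floor_rpow_le (a := r - 2) (by linarith)
  refine ⟨C, hC, fun y hy => (exceedanceSum_le_sum_sum r hp hpβ hy).trans ?_⟩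
  have inner_le (i : ℕ) :
      ∑ n ∈ Icc 1 ⌊(y * (i : ℝ) ^ β) ^ (p + β)⁻¹⌋₊, (n : ℝ) ^ (r - 2) ≤
        C * (y ^ t * (i : ℝ) ^ (β * t)) := calc
    _ ≤ C * ((y * (i : ℝ) ^ β) ^ (p + β)⁻¹) ^ (r - 2 + 1) := hsum _ (by positivity)
    _ = C * (y * (i : ℝ) ^ β) ^ t := by
        rw [← Real.rpow_mul (by positivity), ht]
        ring_nf
    _ = C * (y ^ t * (i : ℝ) ^ (β * t)) := by
        rw [Real.mul_rpow hy (by positivity), ← Real.rpow_mul i.cast_nonneg]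
  simp_rw [mul_sum]
  rw [ENNReal.ofReal_sum_of_nonneg fun i _ => by positivity]
  refine sum_le_sum fun i _ => ?_
  rw [← ENNReal.ofReal_sum_of_nonneg fun n _ => by positivity]
  exact ENNReal.ofReal_le_ofReal (inner_le i)

lemma exists_rpow_mul_sum_le_momentGauge {r p β : ℝ} (hr : 1 < r) (hp : 0 < p)
    (hpβ : 0 < p + β) :
    ∃ C : ℝ, 0 ≤ C ∧ ∀ y : ℝ, 0 ≤ y →
      y ^ ((r - 1) / (p + β)) * ∑ i ∈ Icc 1 ⌊y ^ p⁻¹⌋₊, (i : ℝ) ^ (β * ((r - 1) / (p + β))) ≤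
        C * momentGauge r p β y := by
  have hr₀ : 0 < r := by linarith
  unfold momentGauge
  set t := (r - 1) / (p + β) with ht
  have ht₀ : 0 < t := div_pos (by linarith) hpβ
  have hβt : β * t + 1 = (β * r + p) / (p + β) := by rw [ht]; field_simp; ring
  have hexp : t + p⁻¹ * (β * t + 1) = r / p := by rw [ht]; field_simp; ring
  split_ifs with hlt heq
  · have hs : β * t < -1 := by
      have : β * r + p < 0 := by linarith [(lt_div_iff₀ hr₀).1 hlt]
      linarith [hβt, div_neg_of_neg_of_pos this hpβ]
    refine ⟨∑' i : ℕ, (i : ℝ) ^ (β * t), tsum_nonneg fun i => by positivity, fun y hy => ?_⟩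
    rw [mul_comm]
    gcongr
    exact (Real.summable_nat_rpow.2 hs).sum_le_tsum _ fun i _ => by positivity
  · have hs : β * t + 1 = 0 := by rw [hβt, heq]; field_simp; simp
    have htr : t = r / p := by simpa only [hs, mul_zero, add_zero] using hexp
    obtain ⟨C, hC, hsum⟩ := exists_sum_Icc_floor_rpow_inv_le_log (inv_pos.2 hp)
    refine ⟨C, hC, fun y hy => ?_⟩
    simp_rw [eq_neg_of_add_eq_zero_left hs, Real.rpow_neg_one, htr]
    rw [mul_left_comm]
    gcongr
    exact hsum y hy
  · have hs : 0 < β * t + 1 := by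
      have : -p / r < β := lt_of_le_of_ne (not_lt.1 hlt) (Ne.symm heq)
      rw [hβt]
      exact div_pos (by linarith [(div_lt_iff₀ hr₀).1 this]) hpβ
    rw [← hexp]
    exact exists_rpow_mul_sum_Icc_floor_rpow_le ht₀.le (inv_nonneg.2 hp.le) (by linarith)

lemma exists_exceedanceSum_mul_le_momentGauge {r p β c : ℝ} (hr : 1 < r) (hp : 0 < p)
    (hpβ : 0 < p + β) (hc : 0 ≤ c) :
    ∃ C : ℝ, ∀ x : ℝ, 0 ≤ x →
      exceedanceSum r p β (c * x) ≤ ENNReal.ofReal (C * momentGauge r p β x) := by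
  obtain ⟨A, hA, hcount⟩ := exists_exceedanceSum_le_rpow_mul_sum hr hp hpβ
  obtain ⟨B, hB, hgauge⟩ := exists_rpow_mul_sum_le_momentGauge hr hp hpβ
  obtain ⟨D, hscale⟩ := exists_momentGauge_mul_le r p β hc
  refine ⟨A * (B * D), fun x hx => (hcount _ (by positivity)).trans ?_⟩
  rw [mul_assoc A, mul_assoc B]
  refine ENNReal.ofReal_le_ofReal (mul_le_mul_of_nonneg_left ?_ hA)
  exact (hgauge _ (by positivity)).trans (mul_le_mul_of_nonneg_left (hscale x hx) hB)

lemma tsum_mul_sum_measure_lt_eq_lintegral {Ω ι κ : Type*} [MeasurableSpace Ω] [Countable ι]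
    {P : Measure Ω} {Y : Ω → ℝ} (hY : AEMeasurable Y P) (w : ι → ℝ≥0∞) (s : ι → Finset κ)
    (c : ι → κ → ℝ) :
    ∑' n, w n * ∑ i ∈ s n, P {ω | c n i < Y ω} =
      ∫⁻ ω, ∑' n, w n * ∑ i ∈ s n, (Set.Ioi (c n i)).indicator 1 (Y ω) ∂P := by
  have hind (n : ι) (i : κ) :
      AEMeasurable (fun ω => (Set.Ioi (c n i)).indicator (1 : ℝ → ℝ≥0∞) (Y ω)) P :=
    (measurable_one.indicator measurableSet_Ioi).comp_aemeasurable hY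
  have hsum (n : ι) := Finset.aemeasurable_fun_sum (s n) fun i _ => hind n i
  rw [lintegral_tsum fun n => (hsum n).const_mul (w n)]
  refine tsum_congr fun n => ?_
  rw [lintegral_const_mul'' _ (hsum n), lintegral_finsetSum' _ fun i _ => hind n i]
  refine congrArg (w n * ·) (sum_congr rfl fun i _ => ?_)
  exact (lintegral_indicator_one₀ (nullMeasurableSet_lt aemeasurable_const hY)).symm

theorem stmt_16_general {Ω E : Type*} [MeasurableSpace Ω] [SeminormedAddCommGroup E]
    {P : Measure Ω} {X : Ω → E} (hX : AEStronglyMeasurable X P)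
    {r p β : ℝ} (hr : 1 < r) (hp : 0 < p) (hpβ : 0 < p + β)
    (hmom1 : β < -p / r → Integrable (fun ω => ‖X ω‖ ^ ((r - 1) / (p + β))) P)
    (hmom2 : β = -p / r → Integrable (fun ω => ‖X ω‖ ^ (r / p) * Real.log (1 + ‖X ω‖)) P)
    (hmom3 : -p / r < β → Integrable (fun ω => ‖X ω‖ ^ (r / p)) P)
    {ε : ℝ} (hε : 0 < ε) :
    ∑' n : ℕ, ENNReal.ofReal ((n : ℝ) ^ (r - 2)) *
        ∑ i ∈ Icc 1 n, P {ω | ε * (n : ℝ) ^ (p + β) * (i : ℝ) ^ (-β) < ‖X ω‖} < ⊤ := by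
  have hgauge : Integrable (fun ω => momentGauge r p β ‖X ω‖) P := by
    unfold momentGauge
    split_ifs with hlt heq
    exacts [hmom1 hlt, hmom2 heq, hmom3 (lt_of_le_of_ne (not_lt.1 hlt) (Ne.symm heq))]
  obtain ⟨C, hC⟩ := exists_exceedanceSum_mul_le_momentGauge hr hp hpβ (inv_nonneg.2 hε.le)
  simp_rw [mul_assoc ε, ← lt_inv_mul_iff₀ hε]
  rw [tsum_mul_sum_measure_lt_eq_lintegral (hX.norm.aemeasurable.const_mul ε⁻¹)]
  calc ∫⁻ ω, exceedanceSum r p β (ε⁻¹ * ‖X ω‖) ∂P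
      ≤ ∫⁻ ω, ENNReal.ofReal (C * momentGauge r p β ‖X ω‖) ∂P :=
        lintegral_mono fun ω => hC _ (norm_nonneg _)
    _ < ⊤ := (hgauge.const_mul C).lintegral_lt_top

/-- Classical form of the estimate of the term `I₄` (display (4.4)) in the proof of
Theorem 3.1: under the appropriate moment condition (in each of the three regimes for `β`),
`∑_{n=1}^∞ n^{r-2} ∑_{i=1}^n P(|X| > ε n^{p+β} i^{-β}) < ∞`. -/
theorem stmt_16 {Ω : Type*} [MeasurableSpace Ω] (P : Measure Ω) [IsProbabilityMeasure P]
    (X : Ω → ℝ) (hmeas : Measurable X)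
    (r p β : ℝ) (hr : 1 < r) (hp : 1 / 2 < p) (hβp : 0 < β + p)
    (hmom1 : -p < β → β < -p / r → Integrable (fun ω => |X ω| ^ ((r - 1) / (p + β))) P)
    (hmom2 : β = -p / r → Integrable (fun ω => |X ω| ^ (r / p) * Real.log (1 + |X ω|)) P)
    (hmom3 : -p / r < β → Integrable (fun ω => |X ω| ^ (r / p)) P)
    (ε : ℝ) (hε : 0 < ε) :
    ∑' n : ℕ, ENNReal.ofReal ((n : ℝ) ^ (r - 2)) *
        ∑ i ∈ Finset.Icc 1 n,
          P {ω | ε * (n : ℝ) ^ (p + β) * (i : ℝ) ^ (-β) < |X ω|} < ⊤ := by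
  have hpβ : 0 < p + β := by linarith
  exact stmt_16_general hmeas.aestronglyMeasurable hr (by linarith) hpβ (hmom1 (by linarith)) hmom2
    hmom3 hε
end

section
/- Let $X$ be a real random variable on a probability space $(\Omega,\mathcal F,P)$ with $E[X]=0$, let $1/2<p\le 1$, $r>1$, and $\beta$ be a real number with $\beta+p>0$, and assume $E\big[|X|^{r/p}\big]<\infty$. Set $a_{ni}=i^{\beta}n^{-p-\beta}$ for $1\le i\le n$. Then there exists $\delta_0>0$ such that for every $0<\delta<\delta_0$, $\sum_{i=1}^{n} E\big[|a_{ni}X|\,\mathbf 1\{|a_{ni}X|>n^{-\delta}\}\big]\;\longrightarrow\;0 \quad\text{as } n\to\infty$. -/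
open MeasureTheory Filter

/-!
Write `q = r / p` and `Y = a_{ni} X`. On `{‖Y‖ > n^{-δ}}` one has `‖Y‖ ≤ n^{δ(q-1)} ‖Y‖^q`, so the
sum of tail expectations is at most `E‖X‖^q` times `n^{-κ} ∑ i^{βq}`, where
`κ = q(p+β) - δ(q-1)`. This tends to `0` as soon as `κ > max(βq+1, 0)`, which at `δ = 0` reads
`r > 1` and `p + β > 0`, and therefore persists for small `δ`. The logarithmic case `βq = -1`
needs no separate treatment: for `max(βq+1, 0) < γ < κ`, the bound
`i^{βq} ≤ i^{βq-γ} n^γ` for `i ≤ n` leaves a convergent series in `i`.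
-/

section PowerSums

variable {s γ κ : ℝ}

lemma sum_Icc_rpow_le_tsum_mul_rpow (hγ : 0 ≤ γ) (hs : s + 1 < γ) (n : ℕ) :
    ∑ i ∈ Finset.Icc 1 n, (i : ℝ) ^ s ≤ (∑' i : ℕ, (i : ℝ) ^ (s - γ)) * (n : ℝ) ^ γ := by
  have hsum : Summable fun i : ℕ => (i : ℝ) ^ (s - γ) :=
    Real.summable_nat_rpow.2 (by linarith)
  have hterm : ∀ i ∈ Finset.Icc 1 n, (i : ℝ) ^ s ≤ (i : ℝ) ^ (s - γ) * (n : ℝ) ^ γ := by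
    intro i hi
    obtain ⟨hi1, hin⟩ := Finset.mem_Icc.1 hi
    have hi0 : (0 : ℝ) < i := by exact_mod_cast hi1
    calc (i : ℝ) ^ s = (i : ℝ) ^ (s - γ) * (i : ℝ) ^ γ := by
          rw [← Real.rpow_add hi0, sub_add_cancel]
      _ ≤ (i : ℝ) ^ (s - γ) * (n : ℝ) ^ γ := by gcongr
  calc ∑ i ∈ Finset.Icc 1 n, (i : ℝ) ^ s
      ≤ ∑ i ∈ Finset.Icc 1 n, (i : ℝ) ^ (s - γ) * (n : ℝ) ^ γ := Finset.sum_le_sum hterm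
    _ = (∑ i ∈ Finset.Icc 1 n, (i : ℝ) ^ (s - γ)) * (n : ℝ) ^ γ := (Finset.sum_mul ..).symm
    _ ≤ (∑' i : ℕ, (i : ℝ) ^ (s - γ)) * (n : ℝ) ^ γ := by
        gcongr
        exact hsum.sum_le_tsum _ fun i _ => by positivity

lemma tendsto_rpow_neg_mul_sum_Icc_rpow (hκ : 0 < κ) (hs : s + 1 < κ) :
    Tendsto (fun n : ℕ => (n : ℝ) ^ (-κ) * ∑ i ∈ Finset.Icc 1 n, (i : ℝ) ^ s) atTop (nhds 0) := by
  obtain ⟨γ, hγ, hγκ⟩ := exists_between (max_lt hs hκ)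
  obtain ⟨hsγ, hγ0⟩ := max_lt_iff.1 hγ
  set C : ℝ := ∑' i : ℕ, (i : ℝ) ^ (s - γ)
  have hlim : Tendsto (fun n : ℕ => C * (n : ℝ) ^ (-(κ - γ))) atTop (nhds 0) := by
    simpa only [mul_zero, Function.comp_def] using
      ((tendsto_rpow_neg_atTop (sub_pos.2 hγκ)).comp tendsto_natCast_atTop_atTop).const_mul C
  refine squeeze_zero' (.of_forall fun n => by positivity) ?_ hlim
  filter_upwards [eventually_gt_atTop 0] with n hn
  have hn0 : (0 : ℝ) < n := by exact_mod_cast hn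
  calc (n : ℝ) ^ (-κ) * ∑ i ∈ Finset.Icc 1 n, (i : ℝ) ^ s
      ≤ (n : ℝ) ^ (-κ) * (C * (n : ℝ) ^ γ) := by
        gcongr
        exact sum_Icc_rpow_le_tsum_mul_rpow hγ0.le hsγ n
    _ = C * (n : ℝ) ^ (-(κ - γ)) := by
        rw [mul_left_comm, ← Real.rpow_add hn0, neg_sub, sub_eq_neg_add]

end PowerSums

section TailExpectation

variable {Ω E : Type*} [MeasurableSpace Ω] {μ : Measure Ω} [SeminormedAddCommGroup E]
  {X : Ω → E} {p q β δ t : ℝ}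

lemma le_rpow_one_sub_mul_rpow {y : ℝ} (hq : 1 ≤ q) (ht : 0 < t) (hty : t ≤ y) :
    y ≤ t ^ (1 - q) * y ^ q := by
  have hy : 0 < y := ht.trans_le hty
  calc y = y ^ (1 - q) * y ^ q := by rw [← Real.rpow_add hy, sub_add_cancel, Real.rpow_one]
    _ ≤ t ^ (1 - q) * y ^ q := by
        gcongr ?_ * _
        exact Real.rpow_le_rpow_of_nonpos ht hty (sub_nonpos.2 hq)

lemma nullMeasurableSet_lt_norm_of_integrable_norm_rpow (hq : 0 < q) (ht : 0 ≤ t)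
    (hX : Integrable (fun ω => ‖X ω‖ ^ q) μ) : NullMeasurableSet {ω | t < ‖X ω‖} μ := by
  have hset : {ω | t < ‖X ω‖} = {ω | t ^ q < ‖X ω‖ ^ q} := by
    ext ω
    exact (Real.rpow_lt_rpow_iff ht (norm_nonneg _) hq).symm
  rw [hset]
  exact nullMeasurableSet_lt aemeasurable_const hX.aemeasurable

lemma setIntegral_norm_le_rpow_mul_integral_norm_rpow (hq : 1 ≤ q) (ht : 0 < t)
    (hX : Integrable (fun ω => ‖X ω‖ ^ q) μ) :
    ∫ ω in {ω | t < ‖X ω‖}, ‖X ω‖ ∂μ ≤ t ^ (1 - q) * ∫ ω, ‖X ω‖ ^ q ∂μ := by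
  have hS : NullMeasurableSet {ω | t < ‖X ω‖} μ :=
    nullMeasurableSet_lt_norm_of_integrable_norm_rpow (by linarith) ht.le hX
  have hdom : Integrable (fun ω => t ^ (1 - q) * ‖X ω‖ ^ q) μ := hX.const_mul _
  calc ∫ ω in {ω | t < ‖X ω‖}, ‖X ω‖ ∂μ
      ≤ ∫ ω in {ω | t < ‖X ω‖}, t ^ (1 - q) * ‖X ω‖ ^ q ∂μ :=
        integral_mono_of_nonneg (.of_forall fun ω => norm_nonneg _) hdom.integrableOn
          ((ae_restrict_mem₀ hS).mono fun ω hω => le_rpow_one_sub_mul_rpow hq ht (le_of_lt hω))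
    _ ≤ ∫ ω, t ^ (1 - q) * ‖X ω‖ ^ q ∂μ :=
        setIntegral_le_integral hdom (.of_forall fun ω => by positivity)
    _ = t ^ (1 - q) * ∫ ω, ‖X ω‖ ^ q ∂μ := integral_const_mul _ _

variable [NormedSpace ℝ E]

lemma setIntegral_norm_smul_le_rpow_mul_integral_norm_rpow {a : ℝ} (hq : 1 ≤ q) (ht : 0 < t)
    (hX : Integrable (fun ω => ‖X ω‖ ^ q) μ) :
    ∫ ω in {ω | t < ‖a • X ω‖}, ‖a • X ω‖ ∂μ ≤ t ^ (1 - q) * |a| ^ q * ∫ ω, ‖X ω‖ ^ q ∂μ := by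
  have hpow (ω : Ω) : ‖a • X ω‖ ^ q = |a| ^ q * ‖X ω‖ ^ q := by
    rw [norm_smul, Real.norm_eq_abs, Real.mul_rpow (abs_nonneg a) (norm_nonneg _)]
  have haX : Integrable (fun ω => ‖a • X ω‖ ^ q) μ := by
    simpa only [hpow] using hX.const_mul (|a| ^ q)
  simpa only [hpow, integral_const_mul, mul_assoc] using
    setIntegral_norm_le_rpow_mul_integral_norm_rpow hq ht haX

lemma sum_setIntegral_norm_smul_le (hq : 1 ≤ q) (hX : Integrable (fun ω => ‖X ω‖ ^ q) μ) (n : ℕ) :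
    ∑ i ∈ Finset.Icc 1 n,
        ∫ ω in {ω | (n : ℝ) ^ (-δ) < ‖((i : ℝ) ^ β * (n : ℝ) ^ (-p - β)) • X ω‖},
          ‖((i : ℝ) ^ β * (n : ℝ) ^ (-p - β)) • X ω‖ ∂μ
      ≤ (n : ℝ) ^ (-(q * (p + β) - δ * (q - 1))) * (∑ i ∈ Finset.Icc 1 n, (i : ℝ) ^ (β * q)) *
        ∫ ω, ‖X ω‖ ^ q ∂μ := by
  rw [Finset.mul_sum, Finset.sum_mul]
  refine Finset.sum_le_sum fun i hi => ?_
  have hn : (0 : ℝ) < n := by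
    obtain ⟨hi1, hin⟩ := Finset.mem_Icc.1 hi
    exact_mod_cast hi1.trans hin
  have hexp : -(q * (p + β) - δ * (q - 1)) = -δ * (1 - q) + (-p - β) * q := by ring
  have hweight : ((n : ℝ) ^ (-δ)) ^ (1 - q) * |(i : ℝ) ^ β * (n : ℝ) ^ (-p - β)| ^ q =
      (n : ℝ) ^ (-(q * (p + β) - δ * (q - 1))) * (i : ℝ) ^ (β * q) := by
    rw [abs_of_nonneg (by positivity), Real.mul_rpow (by positivity) (by positivity),
      ← Real.rpow_mul hn.le, ← Real.rpow_mul hn.le, ← Real.rpow_mul i.cast_nonneg, hexp,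
      Real.rpow_add hn]
    ring
  rw [← hweight]
  exact setIntegral_norm_smul_le_rpow_mul_integral_norm_rpow hq (by positivity) hX

theorem tendsto_sum_setIntegral_norm_smul (hq : 1 ≤ q)
    (hX : Integrable (fun ω => ‖X ω‖ ^ q) μ)
    (hδ₁ : δ * (q - 1) < q * p - 1) (hδ₂ : δ * (q - 1) < q * (p + β)) :
    Tendsto (fun n : ℕ =>
        ∑ i ∈ Finset.Icc 1 n,
          ∫ ω in {ω | (n : ℝ) ^ (-δ) < ‖((i : ℝ) ^ β * (n : ℝ) ^ (-p - β)) • X ω‖},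
            ‖((i : ℝ) ^ β * (n : ℝ) ^ (-p - β)) • X ω‖ ∂μ)
      atTop (nhds 0) := by
  have hlim := (tendsto_rpow_neg_mul_sum_Icc_rpow (s := β * q) (sub_pos.2 hδ₂)
    (by linarith)).mul_const (∫ ω, ‖X ω‖ ^ q ∂μ)
  rw [zero_mul] at hlim
  exact squeeze_zero
    (fun n => Finset.sum_nonneg fun i _ => integral_nonneg fun ω => norm_nonneg _)
    (sum_setIntegral_norm_smul_le hq hX) hlim

theorem stmt_18_general {r : ℝ} (hp : 0 < p) (hpr : p ≤ r) (hr : 1 < r) (hβp : 0 < β + p)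
    (hX : Integrable (fun ω => ‖X ω‖ ^ (r / p)) μ) :
    ∃ δ₀ > (0 : ℝ), ∀ δ < δ₀,
      Tendsto (fun n : ℕ =>
          ∑ i ∈ Finset.Icc 1 n,
            ∫ ω in {ω | (n : ℝ) ^ (-δ) < ‖((i : ℝ) ^ β * (n : ℝ) ^ (-p - β)) • X ω‖},
              ‖((i : ℝ) ^ β * (n : ℝ) ^ (-p - β)) • X ω‖ ∂μ)
        atTop (nhds 0) := by
  have hq : 1 ≤ r / p := (one_le_div hp).2 hpr
  have hq0 : 0 < r / p := by linarith
  have hqp : r / p * p = r := div_mul_cancel₀ r hp.ne'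
  obtain ⟨c, hc0, hc⟩ := exists_between (lt_min (sub_pos.2 hr) (mul_pos hq0 hβp))
  obtain ⟨hc₁, hc₂⟩ := lt_min_iff.1 hc
  refine ⟨c / (r / p), by positivity, fun δ hδ => ?_⟩
  have hδc : δ * (r / p - 1) ≤ c :=
    calc δ * (r / p - 1) ≤ c / (r / p) * (r / p - 1) := by gcongr
      _ = c - c / (r / p) := by rw [mul_sub_one, div_mul_cancel₀ c hq0.ne']
      _ ≤ c := sub_le_self c (by positivity)
  exact tendsto_sum_setIntegral_norm_smul hq hX (by linarith) (by linarith)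

end TailExpectation

/-- Classical form of the centering estimate (4.9) in the proof of Theorem 3.1: if
`E[X] = 0`, `1/2 < p ≤ 1`, `r > 1`, `β + p > 0` and `E|X|^{r/p} < ∞`, then with
`a_{ni} = i^β n^{-p-β}` there is `δ₀ > 0` such that for all `0 < δ < δ₀`,
`∑_{i=1}^n E[|a_{ni} X| 1{|a_{ni} X| > n^{-δ}}] → 0` as `n → ∞`. -/
theorem stmt_18 {Ω : Type*} [MeasurableSpace Ω] (P : Measure Ω) [IsProbabilityMeasure P]
    (X : Ω → ℝ) (hmeas : Measurable X)
    (hint : Integrable X P) (hmean : ∫ ω, X ω ∂P = 0)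
    (p r β : ℝ) (hp1 : 1 / 2 < p) (hp2 : p ≤ 1) (hr : 1 < r) (hβp : 0 < β + p)
    (hmom : Integrable (fun ω => |X ω| ^ (r / p)) P) :
    ∃ δ₀ > (0 : ℝ), ∀ δ : ℝ, 0 < δ → δ < δ₀ →
      Tendsto (fun n : ℕ =>
          ∑ i ∈ Finset.Icc 1 n,
            ∫ ω in {ω | (n : ℝ) ^ (-δ) < |(i : ℝ) ^ β * (n : ℝ) ^ (-p - β) * X ω|},
              |(i : ℝ) ^ β * (n : ℝ) ^ (-p - β) * X ω| ∂P)
        atTop (nhds 0) := by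
  obtain ⟨δ₀, hδ₀, hlim⟩ := stmt_18_general (X := X) (by linarith) (hp2.trans hr.le) hr hβp hmom
  exact ⟨δ₀, hδ₀, fun δ _ hδ => hlim δ hδ⟩
end
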